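/- arXiv:quant-ph/0412034 — 2 statements merged into one kernel-verified Lean document; each statement's English description precedes it below -/
import Mathlib

section
/- Fix d ≥ 2 and a real t, and let λ ∈ Σ_d. Let σ₁₂(λ) = ∑_{α,β=1}^d γ_{αβ}(λ) · |e_α ⊗ e_β⟩⟨e_α ⊗ e_β| + t² · ∑_{α,β=1}^d √(λ_α λ_β) · |e_α ⊗ e_α⟩⟨e_β ⊗ e_β|, where γ_{αβ}(λ) = (1−t)²/d² + t(1−t)(λ_α + λ_β)/d, and let G(λ) be the d×d matrix with entries G_{αβ} = (c₁ + c₂·λ_α)·δ_{αβ} + t²·√(λ_α λ_β), where c₁ = (1−t)²/d² and c₂ = 2t(1−t)/d. Then the characteristic polynomial of σ₁₂(λ) factors as the product of ∏_{α ≠ β} (X − γ_{αβ}(λ)) and the characteristic polynomial of G(λ); equivalently, the spectrum of σ₁₂(λ) counted with multiplicity consists of the d(d−1) values γ_{αβ}(λ), α ≠ β, together with the d eigenvalues of G(λ). -/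
/-! `σ₁₂(λ)` is block diagonal with respect to the splitting of the basis `e_a ⊗ e_b` into the
diagonal vectors (`a = b`) and the off-diagonal ones (`a ≠ b`): the first sum is diagonal, and the
second one only involves the vectors `e_a ⊗ e_a`. The off-diagonal block is the diagonal matrix of
the `γ_{αβ}` with `α ≠ β`, and the diagonal block, reindexed by `a ↦ (a, a)`, is `G(λ)`, since
`γ_{αα} = c₁ + c₂ λ_α`. The entries are computed in `sigma12_apply`.
-/

open Matrix Polynomial

/-- The standard basis vector `e_a` of `ℂ^d`. -/
def stdVec (d : ℕ) (a : Fin d) : Fin d → ℂ := fun i => if i = a then 1 else 0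

/-- The tensor product vector `e_a ⊗ e_b` in `ℂ^d ⊗ ℂ^d`. -/
def ket2 (d : ℕ) (a b : Fin d) : Fin d × Fin d → ℂ :=
  fun p => stdVec d a p.1 * stdVec d b p.2

/-- The coefficient `γ_{αβ}(λ) = (1-t)²/d² + t(1-t)(λ_α + λ_β)/d`. -/
noncomputable def gammaCoef (d : ℕ) (t : ℝ) (lam : Fin d → ℝ) (α β : Fin d) : ℝ :=
  (1 - t) ^ 2 / (d : ℝ) ^ 2 + t * (1 - t) * (lam α + lam β) / d

/-- The output state `σ₁₂(λ)`. -/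
noncomputable def sigma12 (d : ℕ) (t : ℝ) (lam : Fin d → ℝ) :
    Matrix (Fin d × Fin d) (Fin d × Fin d) ℂ :=
  (∑ α, ∑ β, ((gammaCoef d t lam α β : ℝ) : ℂ) •
      vecMulVec (ket2 d α β) (star (ket2 d α β)))
    + ((t ^ 2 : ℝ) : ℂ) • ∑ α, ∑ β, ((Real.sqrt (lam α * lam β) : ℝ) : ℂ) •
        vecMulVec (ket2 d α α) (star (ket2 d β β))

/-- The matrix `G(λ)` (over `ℂ`) with entries
`G_{αβ} = (c₁ + c₂ λ_α) δ_{αβ} + t² √(λ_α λ_β)`. -/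
noncomputable def GmatC (d : ℕ) (t : ℝ) (lam : Fin d → ℝ) : Matrix (Fin d) (Fin d) ℂ :=
  Matrix.of fun α β =>
    ((((if α = β then (1 - t) ^ 2 / (d : ℝ) ^ 2 + (2 * t * (1 - t) / d) * lam α else 0)
      + t ^ 2 * Real.sqrt (lam α * lam β) : ℝ)) : ℂ)

lemma vecMulVec_ket2_apply (d : ℕ) (a b a' b' : Fin d) (p q : Fin d × Fin d) :
    vecMulVec (ket2 d a b) (star (ket2 d a' b')) p q =
      if p = (a, b) ∧ q = (a', b') then 1 else 0 := by
  obtain ⟨p1, p2⟩ := p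
  obtain ⟨q1, q2⟩ := q
  simp only [vecMulVec_apply, ket2, stdVec, Pi.star_apply, Prod.mk.injEq]
  by_cases h1 : p1 = a <;> by_cases h2 : p2 = b <;> by_cases h3 : q1 = a' <;>
    by_cases h4 : q2 = b' <;> simp [h1, h2, h3, h4]

/-- The entries of `σ₁₂(λ)`: those off the diagonal live on the vectors `e_a ⊗ e_a` only. -/
lemma sigma12_apply (d : ℕ) (t : ℝ) (lam : Fin d → ℝ) (p q : Fin d × Fin d) :
    sigma12 d t lam p q =
      (if p = q then ((gammaCoef d t lam p.1 p.2 : ℝ) : ℂ) else 0) +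
      (if p.1 = p.2 ∧ q.1 = q.2 then ((t ^ 2 * Real.sqrt (lam p.1 * lam q.1) : ℝ) : ℂ) else 0) := by
  obtain ⟨p1, p2⟩ := p
  obtain ⟨q1, q2⟩ := q
  simp only [sigma12, Matrix.add_apply, Matrix.smul_apply, Matrix.sum_apply, smul_eq_mul,
    vecMulVec_ket2_apply]
  congr 1
  · rw [Finset.sum_eq_single p1, Finset.sum_eq_single p2]
    · simp [eq_comm]
    · intro b _ hb
      simp [hb.symm]
    · simp
    · intro a _ ha
      simp [ha.symm]
    · simp
  · rw [Finset.sum_eq_single p1, Finset.sum_eq_single q1]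
    · by_cases h1 : p1 = p2 <;> by_cases h2 : q1 = q2 <;>
        simp [h1, h2, eq_comm (a := p2), eq_comm (a := q2)]
    · intro b _ hb
      simp [hb.symm]
    · simp
    · intro a _ ha
      simp [ha.symm]
    · simp

/-- The characteristic polynomial of `σ₁₂(λ)` factors as the product of
`∏_{α ≠ β} (X - γ_{αβ}(λ))` with the characteristic polynomial of `G(λ)`. -/
theorem sigma12_charpoly_factorization
    (d : ℕ) (hd : 2 ≤ d) (t : ℝ)
    (lam : Fin d → ℝ) (hlam : lam ∈ stdSimplex ℝ (Fin d)) :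
    (sigma12 d t lam).charpoly =
      (∏ p ∈ Finset.univ.filter (fun p : Fin d × Fin d => p.1 ≠ p.2),
        (X - C ((gammaCoef d t lam p.1 p.2 : ℝ) : ℂ))) * (GmatC d t lam).charpoly := by
  classical
  let P : Fin d × Fin d → Prop := fun p => p.1 ≠ p.2
  rw [Matrix.charpoly, Matrix.twoBlockTriangular_det _ P]
  · congr 1
    · have h : (charmatrix (sigma12 d t lam)).toSquareBlockProp P =
          diagonal fun p : {p // P p} =>
            (X - C ((gammaCoef d t lam p.1.1 p.1.2 : ℝ) : ℂ)) := by
        ext1 p q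
        have hp : p.1.1 ≠ p.1.2 := p.2
        by_cases hpq : p = q
        · subst hpq
          simp [toSquareBlockProp, sigma12_apply, hp]
        · have hpq' : p.1 ≠ q.1 := fun h => hpq (Subtype.ext h)
          simp [toSquareBlockProp, sigma12_apply, hp, hpq, hpq']
      rw [h, det_diagonal]
      exact (Finset.prod_subtype _ (by simp [P]) (fun p : Fin d × Fin d =>
        (X - C ((gammaCoef d t lam p.1 p.2 : ℝ) : ℂ)))).symm
    · let e : Fin d ≃ {p : Fin d × Fin d // ¬ P p} :=
        { toFun := fun a => ⟨(a, a), by simp [P]⟩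
          invFun := fun p => p.1.1
          left_inv := fun a => rfl
          right_inv := fun p => Subtype.ext (Prod.ext rfl (not_not.mp p.2)) }
      rw [Matrix.charpoly, ← det_submatrix_equiv_self e]
      congr 1
      ext1 a b
      by_cases hab : a = b
      · subst hab
        have hg : gammaCoef d t lam a a =
            (1 - t) ^ 2 / (d : ℝ) ^ 2 + (2 * t * (1 - t) / d) * lam a := by
          unfold gammaCoef
          ring
        simp [toSquareBlockProp, e, sigma12_apply, GmatC, hg]
      · have hab' : (a, a) ≠ (b, b) := fun h => hab (congrArg Prod.fst h)
        simp [toSquareBlockProp, e, sigma12_apply, GmatC, hab]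
  · intro p hp q hq
    have hq' : q.1 ≠ q.2 := hq
    have hpq : p ≠ q := fun h => hp (h ▸ hq)
    simp [sigma12_apply, hpq, hq']
end

section
/- Let d ≥ 3 and set n = d − 2. Let t satisfy -1/(d-1) ≤ t < 0, and let ν_1,…,ν_n be real numbers with ν_l ≤ 1 for all l and ∑_{l=1}^n ν_l ≥ n + 2td/(1−t). Then for every k with 0 ≤ k ≤ n−1, ∑_{l=1}^n (1 − ν_l)·s_{n−k−1}(ν_1,…,ν̂_l,…,ν_n) − (2(1 + t(d−1))/(td))·s_{n−k}(ν_1,…,ν_n) ≥ 0. -/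
/-!
Write `x l = 1 - ν l ≥ 0`, `X = ∑ x l` and `c = -2(1 + t(d-1))/(td) ≥ 0`. The two constraints on
`t` and `∑ ν l` enter only through `c ≥ 0` and `(c + 2) X ≤ 4`; in particular `X ≤ 2`.

If all `ν l` are nonnegative every term is nonnegative. Otherwise `X ≤ 2` forces exactly one
negative variable, `ν l = -b` say. Let `S` be the set of remaining indices, `Y = ∑_{j ∈ S} x j`, so
that `X = 1 + b + Y`, `b ≤ 1 - Y`, and write `E_q = s_q(ν_j, j ∈ S)`. Expanding in `ν l`,
with `m = n - k`, and dropping nonnegative terms, the left-hand side is at least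
`(1 + b) E_{m-1} - b ∑_{j ∈ S} x j s_{m-2}(S \ {j}) - c b E_{m-1}`.
Since `b ≤ 1 - Y ≤ ν j` and `ν j s_{m-2}(S \ {j}) ≤ E_{m-1}`, this is at least
`(1 + b - Y - c b) E_{m-1}`, and after multiplication by `X` the bound `(c + 2) X ≤ 4` reduces
the sign of the coefficient to `1 + 3 b² + 2 b Y - Y² ≥ 0`, which holds as `0 ≤ Y ≤ 1`.
-/

/-- The elementary symmetric polynomial `s_q` of the variables `ν i`, `i ∈ s`,
with the conventions `s_0 = 1` and `s_q = 0` for `q < 0` (or `q > card s`). -/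
noncomputable def esymm {ι : Type*} [DecidableEq ι] (s : Finset ι) (ν : ι → ℝ) (q : ℤ) : ℝ :=
  if q < 0 then 0 else ∑ A ∈ s.powersetCard q.toNat, ∏ i ∈ A, ν i

theorem esymm_nonneg {ι : Type*} [DecidableEq ι] (s : Finset ι) (ν : ι → ℝ) (q : ℤ)
    (h : ∀ i ∈ s, 0 ≤ ν i) : 0 ≤ esymm s ν q := by
  unfold esymm
  split_ifs
  · exact le_rfl
  · exact Finset.sum_nonneg fun A hA => Finset.prod_nonneg fun i hi =>
      h i ((Finset.mem_powersetCard.1 hA).1 hi)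

/-- The recursion in one variable; the convention `s_q = 0` for `q < 0` makes it valid for
every integer `q`. -/
theorem esymm_insert {ι : Type*} [DecidableEq ι] {s : Finset ι} {a : ι} (ha : a ∉ s)
    (ν : ι → ℝ) (q : ℤ) :
    esymm (insert a s) ν q = esymm s ν q + ν a * esymm s ν (q - 1) := by
  rcases lt_or_ge q 0 with hq | hq
  · simp [esymm, hq, show q - 1 < 0 by omega]
  · obtain ⟨m, rfl⟩ := Int.eq_ofNat_of_zero_le hq
    cases m with
    | zero => simp [esymm]
    | succ m =>
      have h1 : ¬ ((m + 1 : ℕ) : ℤ) < 0 := by omega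
      have h2 : ¬ ((m + 1 : ℕ) : ℤ) - 1 < 0 := by omega
      have h3 : (((m + 1 : ℕ) : ℤ) - 1).toNat = m := by omega
      have h4 : (((m + 1 : ℕ) : ℤ)).toNat = m + 1 := by omega
      have hA : ∀ A ∈ s.powersetCard m, a ∉ A := fun A hA h =>
        ha ((Finset.mem_powersetCard.1 hA).1 h)
      simp only [esymm, h1, h2, if_false, h3, h4]
      rw [Finset.powersetCard_succ_insert ha, Finset.sum_union, Finset.sum_image,
        Finset.mul_sum]
      · congr 1
        exact Finset.sum_congr rfl fun A h => Finset.prod_insert (hA A h)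
      · intro A h B h' hAB
        rw [← Finset.erase_insert (hA A h), ← Finset.erase_insert (hA B h'), hAB]
      · rw [Finset.disjoint_left]
        intro A h h'
        obtain ⟨B, -, rfl⟩ := Finset.mem_image.1 h'
        exact ha ((Finset.mem_powersetCard.1 h).1 (Finset.mem_insert_self a B))

theorem mul_esymm_erase_le {ι : Type*} [DecidableEq ι] {s : Finset ι} {ν : ι → ℝ}
    (h : ∀ i ∈ s, 0 ≤ ν i) {j : ι} (hj : j ∈ s) (q : ℤ) :
    ν j * esymm (s.erase j) ν (q - 1) ≤ esymm s ν q := by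
  have h1 := esymm_insert (Finset.notMem_erase j s) ν q
  rw [Finset.insert_erase hj] at h1
  have := esymm_nonneg (s.erase j) ν q fun i hi => h i (Finset.mem_of_mem_erase hi)
  linarith

/-- The inequality with `t` and `d` replaced by the two facts about the coefficient `c` that
matter, for an arbitrary integer degree `m`. -/
theorem main_inequality_aux {ι : Type*} [Fintype ι] [DecidableEq ι] (ν : ι → ℝ)
    (hν : ∀ l, ν l ≤ 1) (c : ℝ) (hc : 0 ≤ c) (hcX : (c + 2) * ∑ l, (1 - ν l) ≤ 4) (m : ℤ) :
    0 ≤ (∑ l, (1 - ν l) * esymm (Finset.univ.erase l) ν (m - 1)) +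
        c * esymm Finset.univ ν m := by
  by_cases hpos : ∀ l, 0 ≤ ν l
  · have h1 : 0 ≤ ∑ l, (1 - ν l) * esymm (Finset.univ.erase l) ν (m - 1) :=
      Finset.sum_nonneg fun l _ => mul_nonneg (sub_nonneg.2 (hν l))
        (esymm_nonneg _ _ _ fun i _ => hpos i)
    have h2 := mul_nonneg hc (esymm_nonneg Finset.univ ν m fun i _ => hpos i)
    linarith
  push Not at hpos
  obtain ⟨l, hl⟩ := hpos
  set S : Finset ι := Finset.univ.erase l with hS
  have hlS : l ∉ S := Finset.notMem_erase _ _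
  have hU : (Finset.univ : Finset ι) = insert l S :=
    (Finset.insert_erase (Finset.mem_univ l)).symm
  obtain ⟨Y, hY⟩ : ∃ Y, Y = ∑ j ∈ S, (1 - ν j) := ⟨_, rfl⟩
  have hX : ∑ j, (1 - ν j) = (1 - ν l) + Y := by rw [hU, Finset.sum_insert hlS, hY]
  rw [hX] at hcX
  have hY0 : 0 ≤ Y := hY ▸ Finset.sum_nonneg fun j _ => sub_nonneg.2 (hν j)
  have hX2 : (1 - ν l) + Y ≤ 2 := by nlinarith
  have hxY : ∀ j ∈ S, 1 - ν j ≤ Y := fun j hj => hY ▸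
    Finset.single_le_sum (f := fun j => 1 - ν j) (fun i _ => sub_nonneg.2 (hν i)) hj
  have hSpos : ∀ j ∈ S, 0 ≤ ν j := fun j hj => by linarith [hxY j hj]
  have hE := esymm_nonneg S ν (m - 1) hSpos
  have hE' := esymm_nonneg S ν m hSpos
  have hterm : ∀ j ∈ S, -((1 - ν j) * esymm S ν (m - 1)) ≤
      (1 - ν j) * esymm (Finset.univ.erase j) ν (m - 1) := by
    intro j hj
    have hjl : l ≠ j := fun h => hlS (h ▸ hj)
    have h1 : (Finset.univ : Finset ι).erase j = insert l (S.erase j) := by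
      rw [hU, Finset.erase_insert_of_ne hjl]
    have hp : ∀ i ∈ S.erase j, 0 ≤ ν i := fun i hi => hSpos i (Finset.mem_of_mem_erase hi)
    rw [h1, esymm_insert (fun h => hlS (Finset.mem_of_mem_erase h))]
    have h2 := esymm_nonneg _ ν (m - 1) hp
    have h3 := esymm_nonneg _ ν (m - 1 - 1) hp
    have h4 := mul_esymm_erase_le hSpos hj (m - 1)
    have h5 : -ν l ≤ ν j := by linarith [hxY j hj]
    have h6 := mul_le_mul_of_nonneg_right h5 h3
    rw [← mul_neg]
    exact mul_le_mul_of_nonneg_left (by linarith) (sub_nonneg.2 (hν j))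
  have hsumS := Finset.sum_le_sum hterm
  rw [Finset.sum_neg_distrib, ← Finset.sum_mul, ← hY] at hsumS
  have hcoef : 0 ≤ 1 - ν l - Y + c * ν l := by
    have hXpos : 0 < (1 - ν l) + Y := by linarith
    refine nonneg_of_mul_nonneg_right (a := (1 - ν l) + Y) ?_ hXpos
    have h1 := mul_le_mul_of_nonneg_left hcX (neg_nonneg.2 hl.le)
    have h2 : Y * Y ≤ 1 := by nlinarith
    have h3 := mul_nonneg (neg_nonneg.2 hl.le) hY0
    nlinarith [sq_nonneg (ν l)]
  have hQ : esymm Finset.univ ν m = esymm S ν m + ν l * esymm S ν (m - 1) := by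
    rw [hU, esymm_insert hlS]
  have hP : ∑ j, (1 - ν j) * esymm (Finset.univ.erase j) ν (m - 1) =
      (1 - ν l) * esymm S ν (m - 1) +
        ∑ j ∈ S, (1 - ν j) * esymm (Finset.univ.erase j) ν (m - 1) :=
    (Finset.add_sum_erase _ _ (Finset.mem_univ l)).symm
  rw [hP, hQ]
  have h1 := mul_nonneg hcoef hE
  have h2 := mul_nonneg hc hE'
  nlinarith


/-- The key inequality (main2): for `-1/(d-1) ≤ t < 0`, `n = d-2`, `ν_l ≤ 1` and
`∑ ν_l ≥ n + 2td/(1-t)`, one has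
`∑_l (1-ν_l) s_{n-k-1}(ν̂ₗ) - (2(1+t(d-1))/(td)) s_{n-k}(ν) ≥ 0` for `0 ≤ k ≤ n-1`. -/
theorem main_inequality
    (d n : ℕ) (hd : 3 ≤ d) (hn : n = d - 2) (t : ℝ)
    (ht₁ : -(1 / ((d : ℝ) - 1)) ≤ t) (ht₂ : t < 0)
    (ν : Fin n → ℝ) (hν : ∀ l, ν l ≤ 1)
    (hsum : (n : ℝ) + 2 * t * d / (1 - t) ≤ ∑ l, ν l)
    (k : ℕ) (hk : k ≤ n - 1) :
    0 ≤ (∑ l, (1 - ν l) * esymm (Finset.univ.erase l) ν ((n : ℤ) - k - 1)) -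
        (2 * (1 + t * ((d : ℝ) - 1)) / (t * d)) * esymm Finset.univ ν ((n : ℤ) - k) := by
  have hd' : (3 : ℝ) ≤ d := by exact_mod_cast hd
  have hD : 0 < -(t * d) := by nlinarith
  have hc : 0 ≤ 1 + t * ((d : ℝ) - 1) := by
    have h1 : 0 < (d : ℝ) - 1 := by linarith
    have h2 := mul_le_mul_of_nonneg_right ht₁ h1.le
    rw [neg_mul, one_div, inv_mul_cancel₀ h1.ne'] at h2
    linarith
  have hX : ∑ l, (1 - ν l) ≤ 2 * -(t * d) / (1 - t) := by
    rw [Finset.sum_sub_distrib]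
    have : 2 * -(t * (d : ℝ)) / (1 - t) = -(2 * t * d / (1 - t)) := by ring
    simp only [Finset.sum_const, Finset.card_univ, Fintype.card_fin, nsmul_eq_mul, mul_one]
    linarith
  have hc2 : 2 * (1 + t * ((d : ℝ) - 1)) / -(t * d) + 2 = 2 * (1 - t) / -(t * d) := by
    rw [div_add' _ _ _ hD.ne']
    ring
  have key := main_inequality_aux ν hν (2 * (1 + t * ((d : ℝ) - 1)) / -(t * d))
    (by positivity) (by
      rw [hc2]
      have h1 : 0 < 1 - t := by linarith
      calc _ ≤ 2 * (1 - t) / -(t * d) * (2 * -(t * d) / (1 - t)) := by gcongr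
        _ = 4 := by
          generalize -(t * (d : ℝ)) = D at hD
          field_simp
          norm_num) ((n : ℤ) - k)
  rwa [div_neg, neg_mul, ← sub_eq_add_neg] at key
end
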